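/- arXiv:2404.18233 — 5 statements merged into one kernel-verified Lean document; each statement's English description precedes it below -/
import Mathlib

section
/- Let T > 0, let m ≥ 1 and n ≥ 1, and let 0 = s_0 < s_1 < ⋯ < s_m = T and 0 = u_0 < u_1 < ⋯ < u_n = T be strictly increasing real sequences sharing the endpoints 0 and T, whose interior points are pairwise distinct (s_i ≠ u_j whenever 0 < i < m and 0 < j < n). Then the number of pairs (i,j) with 1 ≤ i ≤ m, 1 ≤ j ≤ n and Set.Ioc s_{i−1} s_i ∩ Set.Ioc u_{j−1} u_j ≠ ∅ equals 1 + (m−1) + (n−1), i.e., one plus the total number of interior points of the two sequences. -/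
/-!
If two intervals overlap, the right endpoint `min (s i) (u j)` of their intersection is a point of
the common refinement of the two subdivisions. Conversely, every point of the common refinement
other than the initial one lies in exactly one interval of each sequence, and it is the right
endpoint of the intersection of these two. Hence the overlapping pairs are as many as the elements
of `{s 1, …, s m} ∪ {u 1, …, u n}`, and inclusion–exclusion gives `m + n` minus the number of
common points; in the theorem the only common point is `T`.
-/

theorem pairwiseDisjoint_Ioc_pred {α : Type*} [Preorder α] {s : ℕ → α} {m : ℕ}
    (hs : MonotoneOn s (Set.Iic m)) :
    (Set.Iic m).PairwiseDisjoint fun i ↦ Set.Ioc (s (i - 1)) (s i) := by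
  have disjoint_of_lt {i j : ℕ} (hj : j ≤ m) (hij : i < j) :
      Disjoint (Set.Ioc (s (i - 1)) (s i)) (Set.Ioc (s (j - 1)) (s j)) :=
    Set.Ioc_disjoint_Ioc_of_le <|
      hs (hij.le.trans hj) ((j.sub_le 1).trans hj) (Nat.le_sub_one_of_lt hij)
  intro i hi j hj hij
  rcases hij.lt_or_gt with h | h
  · exact disjoint_of_lt hj h
  · exact (disjoint_of_lt hi h).symm

section LinearOrder

variable {α : Type*} [LinearOrder α] {s u : ℕ → α} {m n : ℕ}

theorem exists_mem_Ioc_pred {x : α} (hx : x ∈ Set.Ioc (u 0) (u n)) :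
    ∃ j ∈ Finset.Icc 1 n, x ∈ Set.Ioc (u (j - 1)) (u j) := by
  obtain ⟨j, hj, hxj⟩ := Set.mem_iUnion₂.1 (Ioc_subset_biUnion_Ioc n u hx)
  exact ⟨j + 1, Finset.mem_Icc.2 ⟨j.succ_pos, Finset.mem_range.1 hj⟩, hxj⟩

theorem Ioc_inter_Ioc_nonempty_iff_min_mem {a b c d : α} :
    (Set.Ioc a b ∩ Set.Ioc c d).Nonempty ↔ min b d ∈ Set.Ioc a b ∩ Set.Ioc c d := by
  rw [Set.Ioc_inter_Ioc, Set.nonempty_Ioc, Set.right_mem_Ioc]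

open Classical in
/-- The index pairs of overlapping observation intervals of `s 0, …, s m` and `u 0, …, u n`. As in
the paper, the interval with index `i` ends at `s i`, so the indices start at `1`. -/
noncomputable def overlappingPairs (s u : ℕ → α) (m n : ℕ) : Finset (ℕ × ℕ) :=
  (Finset.Icc 1 m ×ˢ Finset.Icc 1 n).filter fun p ↦
    (Set.Ioc (s (p.1 - 1)) (s p.1) ∩ Set.Ioc (u (p.2 - 1)) (u p.2)).Nonempty

theorem mem_overlappingPairs {p : ℕ × ℕ} :
    p ∈ overlappingPairs s u m n ↔ (p.1 ∈ Finset.Icc 1 m ∧ p.2 ∈ Finset.Icc 1 n) ∧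
      min (s p.1) (u p.2) ∈ Set.Ioc (s (p.1 - 1)) (s p.1) ∩ Set.Ioc (u (p.2 - 1)) (u p.2) := by
  simp only [overlappingPairs, Finset.mem_filter, Finset.mem_product,
    Ioc_inter_Ioc_nonempty_iff_min_mem]

theorem swap_mem_overlappingPairs {p : ℕ × ℕ} :
    p.swap ∈ overlappingPairs u s n m ↔ p ∈ overlappingPairs s u m n := by
  rw [mem_overlappingPairs, mem_overlappingPairs, Prod.fst_swap, Prod.snd_swap, min_comm,
    Set.inter_comm, and_comm (a := p.2 ∈ _)]

theorem mapsTo_min_overlappingPairs :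
    Set.MapsTo (fun p : ℕ × ℕ ↦ min (s p.1) (u p.2)) (overlappingPairs s u m n)
      ((Finset.Icc 1 m).image s ∪ (Finset.Icc 1 n).image u : Finset α) := by
  intro p hp
  obtain ⟨⟨hi, hj⟩, -⟩ := mem_overlappingPairs.1 hp
  rcases min_choice (s p.1) (u p.2) with h | h
  · exact Finset.mem_union_left _ (Finset.mem_image.2 ⟨p.1, hi, h.symm⟩)
  · exact Finset.mem_union_right _ (Finset.mem_image.2 ⟨p.2, hj, h.symm⟩)

theorem injOn_min_overlappingPairs (hs : MonotoneOn s (Set.Iic m))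
    (hu : MonotoneOn u (Set.Iic n)) :
    Set.InjOn (fun p : ℕ × ℕ ↦ min (s p.1) (u p.2)) (overlappingPairs s u m n) := by
  intro p hp q hq hpq
  obtain ⟨⟨hpi, hpj⟩, hps, hpu⟩ := mem_overlappingPairs.1 hp
  obtain ⟨⟨hqi, hqj⟩, hqs, hqu⟩ := mem_overlappingPairs.1 hq
  rw [← show min (s p.1) (u p.2) = min (s q.1) (u q.2) from hpq] at hqs hqu
  exact Prod.ext
    ((pairwiseDisjoint_Ioc_pred hs).elim_set (Finset.mem_Icc.1 hpi).2 (Finset.mem_Icc.1 hqi).2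
      _ hps hqs)
    ((pairwiseDisjoint_Ioc_pred hu).elim_set (Finset.mem_Icc.1 hpj).2 (Finset.mem_Icc.1 hqj).2
      _ hpu hqu)

theorem exists_overlappingPairs_min_eq_left (hs : StrictMonoOn s (Set.Iic m)) (h0 : s 0 = u 0)
    (hmn : s m = u n) {i : ℕ} (hi : i ∈ Finset.Icc 1 m) :
    ∃ j, (i, j) ∈ overlappingPairs s u m n ∧ min (s i) (u j) = s i := by
  obtain ⟨h1i, him⟩ := Finset.mem_Icc.1 hi
  have h_mem_u : s i ∈ Set.Ioc (u 0) (u n) :=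
    ⟨h0 ▸ hs m.zero_le him h1i, hmn ▸ hs.monotoneOn him Set.self_mem_Iic him⟩
  have h_pred : s (i - 1) < s i :=
    hs ((i.sub_le 1).trans him) him (Nat.sub_one_lt_of_lt h1i)
  obtain ⟨j, hj, hij⟩ := exists_mem_Ioc_pred h_mem_u
  have h_min : min (s i) (u j) = s i := min_eq_left hij.2
  refine ⟨j, mem_overlappingPairs.2 ⟨⟨hi, hj⟩, ?_⟩, h_min⟩
  rw [h_min]
  exact ⟨Set.right_mem_Ioc.2 h_pred, hij⟩

theorem surjOn_min_overlappingPairs (hs : StrictMonoOn s (Set.Iic m))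
    (hu : StrictMonoOn u (Set.Iic n)) (h0 : s 0 = u 0) (hmn : s m = u n) :
    Set.SurjOn (fun p : ℕ × ℕ ↦ min (s p.1) (u p.2)) (overlappingPairs s u m n)
      ((Finset.Icc 1 m).image s ∪ (Finset.Icc 1 n).image u : Finset α) := by
  intro x hx
  rcases Finset.mem_union.1 hx with hx | hx
  · obtain ⟨i, hi, rfl⟩ := Finset.mem_image.1 hx
    obtain ⟨j, hij, h_min⟩ := exists_overlappingPairs_min_eq_left hs h0 hmn hi
    exact ⟨(i, j), hij, h_min⟩
  · obtain ⟨j, hj, rfl⟩ := Finset.mem_image.1 hx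
    obtain ⟨i, hji, h_min⟩ := exists_overlappingPairs_min_eq_left hu h0.symm hmn.symm hj
    exact ⟨(i, j), swap_mem_overlappingPairs.1 hji, (min_comm _ _).trans h_min⟩

theorem card_overlappingPairs (hs : StrictMonoOn s (Set.Iic m)) (hu : StrictMonoOn u (Set.Iic n))
    (h0 : s 0 = u 0) (hmn : s m = u n) :
    (overlappingPairs s u m n).card =
      ((Finset.Icc 1 m).image s ∪ (Finset.Icc 1 n).image u).card :=
  Finset.card_nbij _ mapsTo_min_overlappingPairs
    (injOn_min_overlappingPairs hs.monotoneOn hu.monotoneOn)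
    (surjOn_min_overlappingPairs hs hu h0 hmn)

theorem card_image_Icc_one (hs : StrictMonoOn s (Set.Iic m)) :
    ((Finset.Icc 1 m).image s).card = m := by
  have h_inj : Set.InjOn s (Finset.Icc 1 m) :=
    hs.injOn.mono fun _ hi ↦ (Finset.mem_Icc.1 hi).2
  rw [Finset.card_image_of_injOn h_inj, Nat.card_Icc, Nat.add_sub_cancel]

theorem overlaps_count_shared_endpoints_general (hs : StrictMonoOn s (Set.Iic m))
    (hu : StrictMonoOn u (Set.Iic n)) (h0 : s 0 = u 0) (hmn : s m = u n) :
    (overlappingPairs s u m n).card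
      + ((Finset.Icc 1 m).image s ∩ (Finset.Icc 1 n).image u).card = m + n := by
  rw [card_overlappingPairs hs hu h0 hmn, Finset.card_union_add_card_inter,
    card_image_Icc_one hs, card_image_Icc_one hu]

theorem image_inter_image_eq_singleton (hm : 1 ≤ m) (hn : 1 ≤ n) (hmn : s m = u n)
    (hdist : ∀ i j : ℕ, 0 < i → i < m → 0 < j → j < n → s i ≠ u j) :
    (Finset.Icc 1 m).image s ∩ (Finset.Icc 1 n).image u = {s m} := by
  refine Finset.Subset.antisymm (fun x hx ↦ Finset.mem_singleton.2 ?_)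
    (Finset.singleton_subset_iff.2 ?_)
  · simp only [Finset.mem_inter, Finset.mem_image, Finset.mem_Icc] at hx
    obtain ⟨⟨i, ⟨hi, him⟩, rfl⟩, j, ⟨hj, hjn⟩, hji⟩ := hx
    rcases him.eq_or_lt with rfl | him
    · rfl
    rcases hjn.eq_or_lt with rfl | hjn
    · exact hji.symm.trans hmn.symm
    · exact absurd hji.symm (hdist i j hi him hj hjn)
  · exact Finset.mem_inter.2 ⟨Finset.mem_image_of_mem s (Finset.right_mem_Icc.2 hm),
      hmn ▸ Finset.mem_image_of_mem u (Finset.right_mem_Icc.2 hn)⟩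

end LinearOrder

open Classical in
/-- Two strictly increasing sequences sharing endpoints `0` and `T`, with pairwise
distinct interior points, have exactly `1 + (m-1) + (n-1)` overlapping pairs of
consecutive observation intervals. -/
theorem overlaps_count_shared_endpoints (T : ℝ) (hT : 0 < T) (m n : ℕ)
    (hm : 1 ≤ m) (hn : 1 ≤ n) (s u : ℕ → ℝ)
    (hs0 : s 0 = 0) (hsm : s m = T) (hu0 : u 0 = 0) (hun : u n = T)
    (hs : ∀ i < m, s i < s (i + 1)) (hu : ∀ j < n, u j < u (j + 1))
    (hdist : ∀ i j : ℕ, 0 < i → i < m → 0 < j → j < n → s i ≠ u j) :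
    ((Finset.Icc 1 m ×ˢ Finset.Icc 1 n).filter
        (fun p : ℕ × ℕ =>
          (Set.Ioc (s (p.1 - 1)) (s p.1) ∩ Set.Ioc (u (p.2 - 1)) (u p.2)).Nonempty)).card
      = 1 + (m - 1) + (n - 1) := by
  have hmn : s m = u n := hsm.trans hun.symm
  have h_count := overlaps_count_shared_endpoints_general (strictMonoOn_Iic_of_lt_succ hs)
    (strictMonoOn_Iic_of_lt_succ hu) (hs0.trans hu0.symm) hmn
  rw [image_inter_image_eq_singleton hm hn hmn hdist, Finset.card_singleton,
    overlappingPairs] at h_count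
  omega
end

section
/- Assume for every j with 1 ≤ j ≤ M₂ that t¹_0 < t²_j and t²_{j−1} < t¹_{M₁}, so that S_j := {i : 1 ≤ i ≤ M₁ and Set.Ioc t¹_{i−1} t¹_i ∩ Set.Ioc t²_{j−1} t²_j ≠ ∅} is nonempty; put l_j := min S_j and u_j := max S_j. Then for all P¹, P² : ℝ → ℝ, HY(P¹,P²) = ∑_{j=1}^{M₂} (P¹(t¹_{u_j}) − P¹(t¹_{l_j − 1}))·(P²(t²_j) − P²(t²_{j−1})); i.e., the inner telescoping sums collapse the Hayashi–Yoshida double sum to a single sum over j. -/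
open Classical in
/-- Indicator `χ(i,j)` of the event that the observation intervals
`(t¹_{i-1}, t¹_i]` and `(t²_{j-1}, t²_j]` overlap. -/
noncomputable def chi (t₁ t₂ : ℕ → ℝ) (i j : ℕ) : ℝ :=
  if (Set.Ioc (t₁ (i - 1)) (t₁ i) ∩ Set.Ioc (t₂ (j - 1)) (t₂ j)).Nonempty then 1 else 0

/-- The Hayashi–Yoshida double sum for price functions `P₁, P₂` and observation
times `t₁ 0 < ⋯ < t₁ M₁` and `t₂ 0 < ⋯ < t₂ M₂`. -/
noncomputable def HY (M₁ M₂ : ℕ) (t₁ t₂ : ℕ → ℝ) (P₁ P₂ : ℝ → ℝ) : ℝ :=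
  ∑ i ∈ Finset.Icc 1 M₁, ∑ j ∈ Finset.Icc 1 M₂,
    (P₁ (t₁ i) - P₁ (t₁ (i - 1))) * (P₂ (t₂ j) - P₂ (t₂ (j - 1))) * chi t₁ t₂ i j

/-- The observation time `t₂ j` is *nonextant* if the Hayashi–Yoshida sum does not
depend on the value of the second price function at `t₂ j`. -/
def Nonextant (M₁ M₂ : ℕ) (t₁ t₂ : ℕ → ℝ) (j : ℕ) : Prop :=
  ∀ P₁ P₂ P₂' : ℝ → ℝ, (∀ x : ℝ, x ≠ t₂ j → P₂' x = P₂ x) →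
    HY M₁ M₂ t₁ t₂ P₁ P₂ = HY M₁ M₂ t₁ t₂ P₁ P₂'

/-!
Exchange the order of summation. For fixed `j`, the intervals `(t¹_{i-1}, t¹_i]` meeting
`(t²_{j-1}, t²_j]` are consecutive: any interval strictly between two of them contains its right
endpoint, which lies between two points of `(t²_{j-1}, t²_j]`. The only exceptions are empty
intervals, created by repeated observation times, and over these the increment of `P¹` vanishes.
Hence the inner sum telescopes.
-/

section Overlap

variable {α : Type*} [Preorder α]

/-- The set `S_j` of the paper, for an arbitrary set `s` in place of `(t²_{j-1}, t²_j]`: the indices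
`1 ≤ i ≤ M` whose observation interval `(t (i - 1), t i]` meets `s`. -/
def overlapIndices (t : ℕ → α) (M : ℕ) (s : Set α) : Set ℕ :=
  {i | 1 ≤ i ∧ i ≤ M ∧ (Set.Ioc (t (i - 1)) (t i) ∩ s).Nonempty}

variable {t : ℕ → α} {M : ℕ} {s : Set α}

theorem mem_overlapIndices_of_mem_Icc (ht : MonotoneOn t (Set.Iic M)) (hs : s.OrdConnected)
    {l u i : ℕ} (hl : l ∈ overlapIndices t M s) (hu : u ∈ overlapIndices t M s)
    (hi : i ∈ Set.Icc l u) (hlt : t (i - 1) < t i) : i ∈ overlapIndices t M s := by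
  obtain ⟨hli, hiu⟩ := hi
  obtain rfl | hli := hli.eq_or_lt
  · exact hl
  obtain rfl | hiu := hiu.eq_or_lt
  · exact hu
  obtain ⟨-, -, x, ⟨-, hxl⟩, hxs⟩ := hl
  obtain ⟨-, huM, y, ⟨huy, -⟩, hys⟩ := hu
  have mono {a b : ℕ} (hab : a ≤ b) (hb : b ≤ M) : t a ≤ t b := ht (hab.trans hb) hb hab
  have hxi : x ≤ t i := hxl.trans (mono hli.le (hiu.le.trans huM))
  have hiy : t i ≤ y := (mono (by omega) (by omega)).trans huy.le
  exact ⟨by omega, by omega, t i, ⟨hlt, le_rfl⟩, hs.out hxs hys ⟨hxi, hiy⟩⟩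

theorem mem_filter_iff_mem_overlapIndices
    [DecidablePred fun i => (Set.Ioc (t (i - 1)) (t i) ∩ s).Nonempty] {i : ℕ} :
    i ∈ {i ∈ Finset.Icc 1 M | (Set.Ioc (t (i - 1)) (t i) ∩ s).Nonempty} ↔
      i ∈ overlapIndices t M s := by
  simp [overlapIndices, and_assoc]

end Overlap

theorem sum_increments_overlapIndices {α G : Type*} [PartialOrder α] [AddCommGroup G]
    {t : ℕ → α} {M : ℕ} {s : Set α}
    [DecidablePred fun i => (Set.Ioc (t (i - 1)) (t i) ∩ s).Nonempty]
    (ht : MonotoneOn t (Set.Iic M)) (hs : s.OrdConnected) {l u : ℕ}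
    (hl : IsLeast (overlapIndices t M s) l) (hu : IsGreatest (overlapIndices t M s) u)
    (P : α → G) :
    ∑ i ∈ Finset.Icc 1 M with (Set.Ioc (t (i - 1)) (t i) ∩ s).Nonempty,
        (P (t i) - P (t (i - 1))) = P (t u) - P (t (l - 1)) := by
  rw [Finset.sum_subset (s₂ := Finset.Icc l u)]
  -- Truncated subtraction makes `(i + 1) - 1` reduce to `i`, so the shifted sequence fits.
  · exact Finset.sum_Icc_sub (hl.2 hu.1) fun i => P (t (i - 1))
  · intro i hi
    rw [mem_filter_iff_mem_overlapIndices] at hi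
    exact Finset.mem_Icc.2 ⟨hl.2 hi, hu.2 hi⟩
  · intro i hi hi_not_overlap
    rw [mem_filter_iff_mem_overlapIndices] at hi_not_overlap
    rw [Finset.mem_Icc] at hi
    have hiM : i ≤ M := hi.2.trans hu.1.2.1
    have hle : t (i - 1) ≤ t i := ht ((Nat.sub_le i 1).trans hiM) hiM (Nat.sub_le i 1)
    have heq : t (i - 1) = t i := hle.eq_of_not_lt fun hlt =>
      hi_not_overlap (mem_overlapIndices_of_mem_Icc ht hs hl.1 hu.1 hi hlt)
    rw [heq, sub_self]

open Classical in
theorem HY_collapse_general {α R : Type*} [PartialOrder α] [NonAssocRing R] {M₁ M₂ : ℕ}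
    {t₁ t₂ : ℕ → α} (ht₁ : MonotoneOn t₁ (Set.Iic M₁)) {l u : ℕ → ℕ}
    (hl : ∀ j, 1 ≤ j → j ≤ M₂ →
      IsLeast (overlapIndices t₁ M₁ (Set.Ioc (t₂ (j - 1)) (t₂ j))) (l j))
    (hu : ∀ j, 1 ≤ j → j ≤ M₂ →
      IsGreatest (overlapIndices t₁ M₁ (Set.Ioc (t₂ (j - 1)) (t₂ j))) (u j))
    (P₁ P₂ : α → R) :
    ∑ i ∈ Finset.Icc 1 M₁, ∑ j ∈ Finset.Icc 1 M₂,
        (P₁ (t₁ i) - P₁ (t₁ (i - 1))) * (P₂ (t₂ j) - P₂ (t₂ (j - 1))) *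
          (if (Set.Ioc (t₁ (i - 1)) (t₁ i) ∩ Set.Ioc (t₂ (j - 1)) (t₂ j)).Nonempty
            then 1 else 0) =
      ∑ j ∈ Finset.Icc 1 M₂,
        (P₁ (t₁ (u j)) - P₁ (t₁ (l j - 1))) * (P₂ (t₂ j) - P₂ (t₂ (j - 1))) := by
  rw [Finset.sum_comm]
  refine Finset.sum_congr rfl fun j hj => ?_
  obtain ⟨hj_pos, hjM⟩ := Finset.mem_Icc.1 hj
  simp only [mul_ite, mul_one, mul_zero]
  rw [← Finset.sum_filter, ← Finset.sum_mul,
    sum_increments_overlapIndices ht₁ Set.ordConnected_Ioc (hl j hj_pos hjM) (hu j hj_pos hjM)]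

/-- If every `S_j` is nonempty, with least element `l j` and greatest element `u j`,
then the Hayashi–Yoshida double sum telescopes to a single sum over `j`. -/
theorem HY_collapse (M₁ M₂ : ℕ) (hM₁ : 1 ≤ M₁) (hM₂ : 1 ≤ M₂) (t₁ t₂ : ℕ → ℝ)
    (ht₁ : ∀ i < M₁, t₁ i < t₁ (i + 1)) (ht₂ : ∀ j < M₂, t₂ j < t₂ (j + 1))
    (hbd : ∀ j, 1 ≤ j → j ≤ M₂ → t₁ 0 < t₂ j ∧ t₂ (j - 1) < t₁ M₁)
    (l u : ℕ → ℕ)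
    (hl : ∀ j, 1 ≤ j → j ≤ M₂ →
      IsLeast {i : ℕ | 1 ≤ i ∧ i ≤ M₁ ∧
        (Set.Ioc (t₁ (i - 1)) (t₁ i) ∩ Set.Ioc (t₂ (j - 1)) (t₂ j)).Nonempty} (l j))
    (hu : ∀ j, 1 ≤ j → j ≤ M₂ →
      IsGreatest {i : ℕ | 1 ≤ i ∧ i ≤ M₁ ∧
        (Set.Ioc (t₁ (i - 1)) (t₁ i) ∩ Set.Ioc (t₂ (j - 1)) (t₂ j)).Nonempty} (u j))
    (P₁ P₂ : ℝ → ℝ) :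
    HY M₁ M₂ t₁ t₂ P₁ P₂ =
      ∑ j ∈ Finset.Icc 1 M₂,
        (P₁ (t₁ (u j)) - P₁ (t₁ (l j - 1))) * (P₂ (t₂ j) - P₂ (t₂ (j - 1))) :=
  HY_collapse_general (monotoneOn_of_le_add_one Set.ordConnected_Iic fun i _ _ hi => (ht₁ i hi).le)
    hl hu P₁ P₂
end

section
/- For 0 < j < M₂, the point t²_j is nonextant if and only if χ(i,j) = χ(i,j+1) for every i with 1 ≤ i ≤ M₁; i.e., the Hayashi–Yoshida sum is independent of the value P²(t²_j) for all choices of P¹ and P² exactly when every interval of the first sequence intersects I²_j if and only if it intersects I²_{j+1}. -/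
/-!
The sum is additive in `P₂`, so it ignores the value `P₂ (t₂ j)` iff it vanishes on every pulse
concentrated at `t₂ j`. Such a pulse of height `d` has increment `d` over the `j`-th interval, `-d`
over the next one and `0` over all others, which reduces the double sum to
`∑ i, ΔᵢP₁ * (d * (χ(i,j) - χ(i,j+1)))`. As the observation times are distinct, the increments
`ΔᵢP₁` can be prescribed at will, so this vanishes for all `P₁` and `d` iff
`χ(i,j) = χ(i,j+1)` for all `i`.
-/

section StieltjesSum

variable {α R : Type*} [Ring R]

/-- The Riemann–Stieltjes sum of the weights `c 1, …, c M` against the increments of `P` along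
`t 0, …, t M`. Nesting two of them, with `χ` as weights, gives the Hayashi–Yoshida sum. -/
def stieltjesSum (M : ℕ) (t : ℕ → α) (P : α → R) (c : ℕ → R) : R :=
  ∑ k ∈ Finset.Icc 1 M, (P (t k) - P (t (k - 1))) * c k

lemma stieltjesSum_sub_left (M : ℕ) (t : ℕ → α) (P Q : α → R) (c : ℕ → R) :
    stieltjesSum M t (P - Q) c = stieltjesSum M t P c - stieltjesSum M t Q c := by
  simp only [stieltjesSum, ← Finset.sum_sub_distrib, ← sub_mul, Pi.sub_apply, sub_sub_sub_comm]

lemma stieltjesSum_sub_right (M : ℕ) (t : ℕ → α) (P : α → R) (c d : ℕ → R) :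
    stieltjesSum M t P (fun k ↦ c k - d k) = stieltjesSum M t P c - stieltjesSum M t P d := by
  simp only [stieltjesSum, ← Finset.sum_sub_distrib, ← mul_sub]

lemma stieltjesSum_single [DecidableEq α] {M : ℕ} {t : ℕ → α} {j : ℕ}
    (ht : ∀ k ≤ M, t k = t j → k = j) (hj0 : 0 < j) (hjM : j < M) (d : R) (c : ℕ → R) :
    stieltjesSum M t (Pi.single (t j) d) c = d * (c j - c (j + 1)) := by
  set P : α → R := Pi.single (t j) d
  have P_apply : ∀ k ≤ M, P (t k) = if k = j then d else 0 := fun k hk ↦ by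
    simp only [P, Pi.single_apply, show t k = t j ↔ k = j from ⟨ht k hk, congrArg t⟩]
  have term_eq : ∀ k ∈ Finset.Icc 1 M, (P (t k) - P (t (k - 1))) * c k =
      (if k = j then d * c k else 0) - if k = j + 1 then d * c k else 0 := by
    intro k hk
    have hkM : k ≤ M := (Finset.mem_Icc.1 hk).2
    rw [P_apply k hkM, P_apply (k - 1) (by lia), sub_mul, ite_zero_mul, ite_zero_mul]
    simp only [show k - 1 = j ↔ k = j + 1 by lia]
  have hj : j ∈ Finset.Icc 1 M := Finset.mem_Icc.2 ⟨hj0, hjM.le⟩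
  have hj' : j + 1 ∈ Finset.Icc 1 M := Finset.mem_Icc.2 ⟨j.succ_pos, hjM⟩
  rw [stieltjesSum, Finset.sum_congr rfl term_eq, Finset.sum_sub_distrib, Finset.sum_ite_eq',
    Finset.sum_ite_eq', if_pos hj, if_pos hj', mul_sub]

lemma stieltjesSum_indicator_image_Icc {M : ℕ} {t : ℕ → α} (ht : Set.InjOn t (Set.Iic M)) {i : ℕ}
    (hi : i ∈ Finset.Icc 1 M) (c : ℕ → R) :
    stieltjesSum M t ((t '' Set.Icc i M).indicator 1) c = c i := by
  classical
  have indicator_apply : ∀ k ≤ M,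
      (t '' Set.Icc i M).indicator (1 : α → R) (t k) = if i ≤ k then 1 else 0 := by
    intro k hk
    have mem_iff : t k ∈ t '' Set.Icc i M ↔ i ≤ k := by
      rw [ht.mem_image_iff (fun _ h ↦ h.2) hk, Set.mem_Icc, and_iff_left hk]
    simp only [Set.indicator_apply, mem_iff, Pi.one_apply]
  rw [stieltjesSum, Finset.sum_eq_single_of_mem i hi]
  · obtain ⟨hi1, hiM⟩ := Finset.mem_Icc.1 hi
    rw [indicator_apply i hiM, indicator_apply (i - 1) (by lia), if_pos le_rfl,
      if_neg (by lia), sub_zero, one_mul]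
  · intro k hk hki
    have hkM : k ≤ M := (Finset.mem_Icc.1 hk).2
    rw [indicator_apply k hkM, indicator_apply (k - 1) (by lia)]
    simp only [show i ≤ k - 1 ↔ i ≤ k by lia, sub_self, zero_mul]

lemma forall_stieltjesSum_eq_zero_iff {M : ℕ} {t : ℕ → α} (ht : Set.InjOn t (Set.Iic M))
    {c : ℕ → R} :
    (∀ P : α → R, stieltjesSum M t P c = 0) ↔ ∀ i ∈ Finset.Icc 1 M, c i = 0 := by
  refine ⟨fun h i hi ↦ ?_, fun h P ↦ Finset.sum_eq_zero fun i hi ↦ by rw [h i hi, mul_zero]⟩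
  rw [← stieltjesSum_indicator_image_Icc ht hi c, h]

end StieltjesSum

lemma forall_map_eq_of_eqOn_compl_singleton_iff {β A G : Type*} [DecidableEq β] [AddGroup A]
    [AddGroup G] (F : (β → A) →+ G) (b : β) :
    (∀ P P' : β → A, Set.EqOn P' P {b}ᶜ → F P = F P') ↔ ∀ d, F (Pi.single b d) = 0 := by
  constructor
  · intro h d
    have eqOn_zero : Set.EqOn (Pi.single b d) 0 {b}ᶜ := fun x hx ↦ by
      rw [Pi.single_eq_of_ne hx, Pi.zero_apply]
    rw [← h 0 _ eqOn_zero, map_zero]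
  · intro h P P' hP
    have sub_eq_single : P' - P = Pi.single b (P' b - P b) := by
      ext x
      rcases eq_or_ne x b with rfl | hx
      · rw [Pi.single_eq_same, Pi.sub_apply]
      · rw [Pi.single_eq_of_ne hx, Pi.sub_apply, hP hx, sub_self]
    rw [eq_comm, ← sub_eq_zero, ← map_sub, sub_eq_single, h]

theorem nonextant_iff_chi_eq_general {α β R : Type*} [Ring R] {M₁ M₂ : ℕ} {t₁ : ℕ → α}
    {t₂ : ℕ → β} {j : ℕ} (ht₁ : Set.InjOn t₁ (Set.Iic M₁)) (ht₂ : ∀ k ≤ M₂, t₂ k = t₂ j → k = j)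
    (hj0 : 0 < j) (hjM : j < M₂) (w : ℕ → ℕ → R) :
    (∀ (P₁ : α → R) (P₂ P₂' : β → R), Set.EqOn P₂' P₂ {t₂ j}ᶜ →
        stieltjesSum M₁ t₁ P₁ (fun i ↦ stieltjesSum M₂ t₂ P₂ (w i)) =
          stieltjesSum M₁ t₁ P₁ (fun i ↦ stieltjesSum M₂ t₂ P₂' (w i))) ↔
      ∀ i ∈ Finset.Icc 1 M₁, w i j = w i (j + 1) := by
  classical
  let F (P₁ : α → R) : (β → R) →+ R :=
    .ofMapSub (fun P₂ ↦ stieltjesSum M₁ t₁ P₁ fun i ↦ stieltjesSum M₂ t₂ P₂ (w i)) fun P Q ↦ by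
      simp only [stieltjesSum_sub_left, stieltjesSum_sub_right]
  have F_single (P₁ : α → R) (d : R) : F P₁ (Pi.single (t₂ j) d) =
      stieltjesSum M₁ t₁ P₁ fun i ↦ d * (w i j - w i (j + 1)) :=
    congrArg (stieltjesSum M₁ t₁ P₁) <| funext fun i ↦ stieltjesSum_single ht₂ hj0 hjM d (w i)
  calc
    _ ↔ ∀ P₁ d, F P₁ (Pi.single (t₂ j) d) = 0 :=
      forall_congr' fun P₁ ↦ forall_map_eq_of_eqOn_compl_singleton_iff (F P₁) (t₂ j)
    _ ↔ ∀ d, ∀ i ∈ Finset.Icc 1 M₁, d * (w i j - w i (j + 1)) = 0 := by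
      simp only [F_single, forall_comm (α := α → R), forall_stieltjesSum_eq_zero_iff ht₁]
    _ ↔ ∀ i ∈ Finset.Icc 1 M₁, w i j = w i (j + 1) :=
      ⟨fun h i hi ↦ sub_eq_zero.1 (by rw [← one_mul (_ - _), h 1 i hi]),
        fun h d i hi ↦ by rw [h i hi, sub_self, mul_zero]⟩

lemma HY_eq_stieltjesSum (M₁ M₂ : ℕ) (t₁ t₂ : ℕ → ℝ) (P₁ P₂ : ℝ → ℝ) :
    HY M₁ M₂ t₁ t₂ P₁ P₂ =
      stieltjesSum M₁ t₁ P₁ fun i ↦ stieltjesSum M₂ t₂ P₂ (chi t₁ t₂ i) := by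
  simp only [HY, stieltjesSum, Finset.mul_sum, mul_assoc]

/-- For `0 < j < M₂`, the point `t₂ j` is nonextant iff `χ(i,j) = χ(i,j+1)` for
every `1 ≤ i ≤ M₁`. -/
theorem nonextant_iff_chi_eq (M₁ M₂ : ℕ) (hM₁ : 1 ≤ M₁) (hM₂ : 1 ≤ M₂)
    (t₁ t₂ : ℕ → ℝ)
    (ht₁ : ∀ i < M₁, t₁ i < t₁ (i + 1)) (ht₂ : ∀ j < M₂, t₂ j < t₂ (j + 1))
    (j : ℕ) (hj1 : 0 < j) (hj2 : j < M₂) :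
    Nonextant M₁ M₂ t₁ t₂ j ↔
      ∀ i : ℕ, 1 ≤ i → i ≤ M₁ → chi t₁ t₂ i j = chi t₁ t₂ i (j + 1) := by
  have inj₁ : Set.InjOn t₁ (Set.Iic M₁) := (strictMonoOn_Iic_of_lt_succ ht₁).injOn
  have inj₂ : Set.InjOn t₂ (Set.Iic M₂) := (strictMonoOn_Iic_of_lt_succ ht₂).injOn
  simpa only [Nonextant, HY_eq_stieltjesSum, Finset.mem_Icc, and_imp] using!
    nonextant_iff_chi_eq_general inj₁ (fun _ hk h ↦ inj₂ hk hj2.le h) hj1 hj2 (chi t₁ t₂)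
end

section
/- Assume the sequences are completely asynchronous, i.e., t¹_i ≠ t²_j for all i, j, and satisfy the boundary overlap conditions max(t¹_0, t²_0) < min(t¹_1, t²_1) and max(t¹_{M₁−1}, t²_{M₂−1}) < min(t¹_{M₁}, t²_{M₂}). Then for every j with 1 < j < M₂ − 1, the point t²_j is nonextant if and only if there exists i with 1 ≤ i ≤ M₁ such that Set.Ioc t²_{j−1} t²_j ∪ Set.Ioc t²_j t²_{j+1} ⊆ Set.Ioc t¹_{i−1} t¹_i. -/
/-
The Hayashi–Yoshida sum is linear in the second price function, so `t₂ j` is nonextant iff the sum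
vanishes on every `P₂` supported at `t₂ j`. For such a `P₂` only the two intervals adjacent to
`t₂ j` contribute, and testing against unit steps in `P₁` shows that nonextance means: each `I¹_i`
meets `I²_j` iff it meets `I²_{j+1}`. The `I¹_i` are order-connected, so one that meets both
neighbours contains `t₂ j`; being disjoint, only one of them can meet `I²_j ∪ I²_{j+1}`, and since
they cover this union, that one contains it.
-/

theorem forall_inter_nonempty_iff_iff_exists_union_subset {α ι : Type*} [Preorder α] {s : Set ι}
    {I : ι → Set α} {A B : Set α} {b : α} (hdisj : s.PairwiseDisjoint I)
    (hconn : ∀ i ∈ s, (I i).OrdConnected) (hA : IsGreatest A b) (hB : b ∈ lowerBounds B)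
    (hBne : B.Nonempty) (hcover : A ∪ B ⊆ ⋃ i ∈ s, I i) :
    (∀ i ∈ s, (I i ∩ A).Nonempty ↔ (I i ∩ B).Nonempty) ↔ ∃ i ∈ s, A ∪ B ⊆ I i := by
  constructor
  · intro hmeet
    obtain ⟨i, hi, hbi⟩ := Set.mem_iUnion₂.1 (hcover (Or.inl hA.1))
    refine ⟨i, hi, fun x hx => ?_⟩
    obtain ⟨k, hk, hxk⟩ := Set.mem_iUnion₂.1 (hcover hx)
    have hmeets : (I k ∩ A).Nonempty ∧ (I k ∩ B).Nonempty := by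
      rcases hx with hxA | hxB
      · exact ⟨⟨x, hxk, hxA⟩, (hmeet k hk).1 ⟨x, hxk, hxA⟩⟩
      · exact ⟨(hmeet k hk).2 ⟨x, hxk, hxB⟩, ⟨x, hxk, hxB⟩⟩
    obtain ⟨⟨y, hyk, hyA⟩, z, hzk, hzB⟩ := hmeets
    have hbk : b ∈ I k := (hconn k hk).out hyk hzk ⟨hA.2 hyA, hB hzB⟩
    rwa [hdisj.elim_set hi hk b hbi hbk]
  · rintro ⟨i, hi, hsub⟩ k hk
    have eq_of_meets : ∀ x ∈ A ∪ B, x ∈ I k → k = i := fun x hx hxk =>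
      hdisj.elim_set hk hi x hxk (hsub hx)
    constructor
    · rintro ⟨x, hxk, hxA⟩
      obtain rfl := eq_of_meets x (Or.inl hxA) hxk
      exact hBne.imp fun y hy => ⟨hsub (Or.inr hy), hy⟩
    · rintro ⟨x, hxk, hxB⟩
      obtain rfl := eq_of_meets x (Or.inr hxB) hxk
      exact ⟨b, hsub (Or.inl hA.1), hA.1⟩

/-- The observation interval `I_i = (t_{i-1}, t_i]` of a sequence of observation times. It is meant
for `i ≥ 1`; truncated subtraction makes it empty at `i = 0`. -/
def obsInterval {α : Type*} [Preorder α] (t : ℕ → α) (i : ℕ) : Set α :=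
  Set.Ioc (t (i - 1)) (t i)

theorem pairwiseDisjoint_obsInterval {α : Type*} [Preorder α] {t : ℕ → α} {M : ℕ}
    (ht : MonotoneOn t (Set.Iic M)) : (Set.Icc 1 M).PairwiseDisjoint (obsInterval t) := by
  have disjoint_of_lt : ∀ i k, i < k → k ≤ M → Disjoint (obsInterval t i) (obsInterval t k) :=
    fun i k hik hk => Set.Ioc_disjoint_Ioc_of_le <|
      ht (hik.le.trans hk) ((Nat.sub_le k 1).trans hk) (Nat.le_sub_one_of_lt hik)
  intro i hi k hk hne
  rcases hne.lt_or_gt with hik | hki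
  · exact disjoint_of_lt i k hik hk.2
  · exact (disjoint_of_lt k i hki hi.2).symm

theorem Ioc_subset_biUnion_obsInterval {α : Type*} [LinearOrder α] (t : ℕ → α) (M : ℕ) :
    Set.Ioc (t 0) (t M) ⊆ ⋃ i ∈ Set.Icc 1 M, obsInterval t i := by
  intro x hx
  obtain ⟨i, hi, hxi⟩ := Set.mem_iUnion₂.1 (Ioc_subset_biUnion_Ioc M t hx)
  exact Set.mem_iUnion₂.2 ⟨i + 1, ⟨i.succ_pos, Finset.mem_range.1 hi⟩, hxi⟩

theorem sum_increments_single_mul {α R : Type*} [DecidableEq α] [NonUnitalNonAssocRing R]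
    {t : ℕ → α} {M j : ℕ} (ht : Set.InjOn t (Set.Iic M)) (hj0 : 0 < j) (hjM : j < M)
    (c : R) (f : ℕ → R) :
    ∑ k ∈ Finset.Icc 1 M,
      ((Pi.single (t j) c : α → R) (t k) - (Pi.single (t j) c : α → R) (t (k - 1))) * f k =
      c * (f j - f (j + 1)) := by
  have single_apply_obs : ∀ k ≤ M, (Pi.single (t j) c : α → R) (t k) = if k = j then c else 0 :=
    fun k hk => by simp only [Pi.single_apply, ht.eq_iff (Set.mem_Iic.2 hk) (Set.mem_Iic.2 hjM.le)]
  have increment : ∀ k ∈ Finset.Icc 1 M,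
      ((Pi.single (t j) c : α → R) (t k) - (Pi.single (t j) c : α → R) (t (k - 1))) * f k =
        (if k = j then c * f k else 0) - (if k = j + 1 then c * f k else 0) := by
    intro k hk
    obtain ⟨hk1, hkM⟩ := Finset.mem_Icc.1 hk
    have pred_eq_iff : k - 1 = j ↔ k = j + 1 := by omega
    simp only [single_apply_obs k hkM, single_apply_obs (k - 1) ((Nat.sub_le k 1).trans hkM),
      pred_eq_iff, sub_mul, ite_mul, zero_mul]
  rw [Finset.sum_congr rfl increment, Finset.sum_sub_distrib, Finset.sum_ite_eq',
    Finset.sum_ite_eq', if_pos (Finset.mem_Icc.2 ⟨hj0, hjM.le⟩),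
    if_pos (Finset.mem_Icc.2 ⟨j.succ_pos, hjM⟩), mul_sub]

theorem sum_increments_indicator_Ici_mul {α R : Type*} [Preorder α] [NonAssocRing R]
    {t : ℕ → α} {M i : ℕ} (ht : MonotoneOn t (Set.Iic M)) (hi : i ∈ Set.Icc 1 M)
    (hlt : t (i - 1) < t i) (f : ℕ → R) :
    ∑ k ∈ Finset.Icc 1 M, ((Set.Ici (t i)).indicator 1 (t k) -
      (Set.Ici (t i)).indicator 1 (t (k - 1))) * f k = f i := by
  have le_obs_iff : ∀ k ≤ M, t i ≤ t k ↔ i ≤ k := fun k hk =>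
    ⟨fun hle => not_lt.1 fun hki => (hle.trans <|
      ht hk ((Nat.sub_le i 1).trans hi.2) (Nat.le_sub_one_of_lt hki)).not_gt hlt,
      fun hik => ht hi.2 hk hik⟩
  have increment : ∀ k ∈ Finset.Icc 1 M, ((Set.Ici (t i)).indicator 1 (t k) -
      (Set.Ici (t i)).indicator 1 (t (k - 1))) * f k = if k = i then f k else 0 := by
    classical
    intro k hk
    obtain ⟨hk1, hkM⟩ := Finset.mem_Icc.1 hk
    simp only [Set.indicator_apply, Set.mem_Ici, le_obs_iff k hkM,
      le_obs_iff (k - 1) ((Nat.sub_le k 1).trans hkM), Pi.one_apply]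
    split_ifs <;> first | omega | simp
  rw [Finset.sum_congr rfl increment, Finset.sum_ite_eq', if_pos (Finset.mem_Icc.2 hi)]

theorem chi_eq_chi_iff {t₁ t₂ : ℕ → ℝ} {i j k : ℕ} :
    chi t₁ t₂ i j = chi t₁ t₂ i k ↔
      ((obsInterval t₁ i ∩ obsInterval t₂ j).Nonempty ↔
        (obsInterval t₁ i ∩ obsInterval t₂ k).Nonempty) := by
  unfold chi obsInterval
  split_ifs with hj hk hk <;> simp [hj, hk]

section HayashiYoshida

variable {M₁ M₂ : ℕ} {t₁ t₂ : ℕ → ℝ} {j : ℕ}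

theorem HY_sub_right (P₁ P₂ P₂' : ℝ → ℝ) :
    HY M₁ M₂ t₁ t₂ P₁ (P₂ - P₂') = HY M₁ M₂ t₁ t₂ P₁ P₂ - HY M₁ M₂ t₁ t₂ P₁ P₂' := by
  simp only [HY, Pi.sub_apply, ← Finset.sum_sub_distrib]
  refine Finset.sum_congr rfl fun i _ => Finset.sum_congr rfl fun k _ => ?_
  ring

theorem nonextant_iff_forall_HY_single_eq_zero :
    Nonextant M₁ M₂ t₁ t₂ j ↔ ∀ P₁ c, HY M₁ M₂ t₁ t₂ P₁ (Pi.single (t₂ j) c) = 0 := by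
  constructor
  · intro h P₁ c
    have hconst := h P₁ (Pi.single (t₂ j) c) 0 fun x hx => by
      rw [Pi.single_eq_of_ne hx, Pi.zero_apply]
    rwa [← sub_eq_zero, ← HY_sub_right, sub_zero] at hconst
  · intro h P₁ P₂ P₂' hP
    have hsingle : P₂ - P₂' = Pi.single (t₂ j) (P₂ (t₂ j) - P₂' (t₂ j)) := by
      ext x
      rcases eq_or_ne x (t₂ j) with rfl | hx
      · rw [Pi.single_eq_same, Pi.sub_apply]
      · rw [Pi.single_eq_of_ne hx, Pi.sub_apply, hP x hx, sub_self]
    rw [← sub_eq_zero, ← HY_sub_right, hsingle, h]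

theorem HY_single_right (ht₂ : Set.InjOn t₂ (Set.Iic M₂)) (hj0 : 0 < j) (hjM : j < M₂)
    (P₁ : ℝ → ℝ) (c : ℝ) :
    HY M₁ M₂ t₁ t₂ P₁ (Pi.single (t₂ j) c) = ∑ i ∈ Finset.Icc 1 M₁,
      (P₁ (t₁ i) - P₁ (t₁ (i - 1))) * (c * (chi t₁ t₂ i j - chi t₁ t₂ i (j + 1))) := by
  simp only [HY, mul_assoc, ← Finset.mul_sum, sum_increments_single_mul ht₂ hj0 hjM]

theorem nonextant_iff_forall_chi_eq (ht₁ : MonotoneOn t₁ (Set.Iic M₁))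
    (ht₂ : Set.InjOn t₂ (Set.Iic M₂)) (hj0 : 0 < j) (hjM : j < M₂) :
    Nonextant M₁ M₂ t₁ t₂ j ↔ ∀ i ∈ Set.Icc 1 M₁, chi t₁ t₂ i j = chi t₁ t₂ i (j + 1) := by
  simp only [nonextant_iff_forall_HY_single_eq_zero, HY_single_right ht₂ hj0 hjM]
  constructor
  · intro h i hi
    have hle : t₁ (i - 1) ≤ t₁ i := ht₁ ((Nat.sub_le i 1).trans hi.2) hi.2 (Nat.sub_le i 1)
    rcases hle.eq_or_lt with heq | hlt
    · simp only [chi_eq_chi_iff, obsInterval, heq, Set.Ioc_self, Set.empty_inter]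
    · have hstep := h ((Set.Ici (t₁ i)).indicator 1) 1
      rwa [sum_increments_indicator_Ici_mul ht₁ hi hlt, one_mul, sub_eq_zero] at hstep
  · intro h P₁ c
    refine Finset.sum_eq_zero fun i hi => ?_
    rw [h i (Finset.mem_Icc.1 hi), sub_self, mul_zero, mul_zero]

theorem nonextant_iff_union_subset_general (ht₁ : MonotoneOn t₁ (Set.Iic M₁))
    (ht₂ : StrictMonoOn t₂ (Set.Iic M₂)) (hj0 : 0 < j) (hjM : j < M₂)
    (hleft : t₁ 0 ≤ t₂ (j - 1)) (hright : t₂ (j + 1) ≤ t₁ M₁) :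
    Nonextant M₁ M₂ t₁ t₂ j ↔
      ∃ i : ℕ, 1 ≤ i ∧ i ≤ M₁ ∧
        Set.Ioc (t₂ (j - 1)) (t₂ j) ∪ Set.Ioc (t₂ j) (t₂ (j + 1)) ⊆
          Set.Ioc (t₁ (i - 1)) (t₁ i) := by
  have hprev : t₂ (j - 1) < t₂ j :=
    ht₂ ((Nat.sub_le j 1).trans hjM.le) hjM.le (Nat.sub_one_lt_of_lt hj0)
  have hnext : t₂ j < t₂ (j + 1) := ht₂ hjM.le hjM j.lt_succ_self
  have hcover : obsInterval t₂ j ∪ obsInterval t₂ (j + 1) ⊆ ⋃ i ∈ Set.Icc 1 M₁, obsInterval t₁ i :=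
    (Set.Ioc_union_Ioc_eq_Ioc hprev.le hnext.le).trans_subset <|
      (Set.Ioc_subset_Ioc hleft hright).trans (Ioc_subset_biUnion_obsInterval t₁ M₁)
  simp only [nonextant_iff_forall_chi_eq ht₁ ht₂.injOn hj0 hjM, chi_eq_chi_iff]
  refine (forall_inter_nonempty_iff_iff_exists_union_subset (pairwiseDisjoint_obsInterval ht₁)
    (fun _ _ => Set.ordConnected_Ioc) (isGreatest_Ioc hprev) (fun _ hx => hx.1.le)
    (Set.nonempty_Ioc.2 hnext) hcover).trans ?_
  simp only [Set.mem_Icc, and_assoc, obsInterval]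

end HayashiYoshida

/-- Under complete asynchrony and the boundary overlap conditions, for
`1 < j < M₂ - 1` the point `t₂ j` is nonextant iff
`I²_j ∪ I²_{j+1} ⊆ I¹_i` for some `1 ≤ i ≤ M₁`. -/
theorem nonextant_iff_union_subset (M₁ M₂ : ℕ) (hM₁ : 1 ≤ M₁) (hM₂ : 1 ≤ M₂)
    (t₁ t₂ : ℕ → ℝ)
    (ht₁ : ∀ i < M₁, t₁ i < t₁ (i + 1)) (ht₂ : ∀ j < M₂, t₂ j < t₂ (j + 1))
    (hasync : ∀ i ≤ M₁, ∀ j ≤ M₂, t₁ i ≠ t₂ j)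
    (hinit : max (t₁ 0) (t₂ 0) < min (t₁ 1) (t₂ 1))
    (hterm : max (t₁ (M₁ - 1)) (t₂ (M₂ - 1)) < min (t₁ M₁) (t₂ M₂))
    (j : ℕ) (hj1 : 1 < j) (hj2 : j < M₂ - 1) :
    Nonextant M₁ M₂ t₁ t₂ j ↔
      ∃ i : ℕ, 1 ≤ i ∧ i ≤ M₁ ∧
        Set.Ioc (t₂ (j - 1)) (t₂ j) ∪ Set.Ioc (t₂ j) (t₂ (j + 1)) ⊆
          Set.Ioc (t₁ (i - 1)) (t₁ i) := by
  have hmono₁ : StrictMonoOn t₁ (Set.Iic M₁) := strictMonoOn_Iic_of_lt_succ ht₁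
  have hmono₂ : StrictMonoOn t₂ (Set.Iic M₂) := strictMonoOn_Iic_of_lt_succ ht₂
  have obs_le : ∀ a b, a ≤ b → b ≤ M₂ → t₂ a ≤ t₂ b := fun a b hab hb =>
    hmono₂.monotoneOn (hab.trans hb) hb hab
  have hleft : t₁ 0 ≤ t₂ (j - 1) := calc
    t₁ 0 ≤ t₂ 1 := ((le_max_left _ _).trans hinit.le).trans (min_le_right _ _)
    _ ≤ t₂ (j - 1) := obs_le 1 (j - 1) (by omega) (by omega)
  have hright : t₂ (j + 1) ≤ t₁ M₁ := calc
    t₂ (j + 1) ≤ t₂ (M₂ - 1) := obs_le (j + 1) (M₂ - 1) (by omega) (by omega)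
    _ ≤ t₁ M₁ := ((le_max_right _ _).trans hterm.le).trans (min_le_left _ _)
  exact nonextant_iff_union_subset_general hmono₁.monotoneOn hmono₂ (by omega) (by omega)
    hleft hright
end

section
/- Fix j with 0 < j < M₂ and assume the two sequences share no common value, t¹_0 < t²_{j−1}, and t²_{j+1} ≤ t¹_{M₁}. Then there exists i with 1 ≤ i ≤ M₁ such that Set.Ioc t²_{j−1} t²_j ∪ Set.Ioc t²_j t²_{j+1} ⊆ Set.Ioc t¹_{i−1} t¹_i if and only if there exists exactly one i with 1 ≤ i ≤ M₁ such that (Set.Ioc t²_{j−1} t²_j ∪ Set.Ioc t²_j t²_{j+1}) ∩ Set.Ioc t¹_{i−1} t¹_i ≠ ∅. -/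
/-!
The intervals `I¹_i` partition `(t¹_0, t¹_{M₁}]`, which contains the nonempty set
`I²_j ∪ I²_{j+1}`; a nonempty subset of a partitioned set lies in a block if and only if it meets
exactly one block.
-/

theorem exists_subset_iff_existsUnique_inter_nonempty {ι α : Type*} {I : Set ι} {A : ι → Set α}
    {S : Set α} (hA : I.PairwiseDisjoint A) (hS : S.Nonempty) (hSA : S ⊆ ⋃ i ∈ I, A i) :
    (∃ i ∈ I, S ⊆ A i) ↔ ∃! i, i ∈ I ∧ (S ∩ A i).Nonempty := by
  constructor
  · rintro ⟨i, hi, hSi⟩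
    refine ⟨i, ⟨hi, by rwa [Set.inter_eq_left.2 hSi]⟩, ?_⟩
    rintro k ⟨hk, x, hxS, hxk⟩
    exact hA.elim_set hk hi x hxk (hSi hxS)
  · rintro ⟨i, ⟨hi, -⟩, huniq⟩
    refine ⟨i, hi, fun x hxS => ?_⟩
    obtain ⟨k, hk, hxk⟩ := Set.mem_iUnion₂.1 (hSA hxS)
    obtain rfl : k = i := huniq k ⟨hk, x, hxS, hxk⟩
    exact hxk

theorem pairwiseDisjoint_Ioc_pred_of_monotoneOn {ι α : Type*} [LinearOrder ι] [PredOrder ι]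
    [Preorder α] {s : Set ι} [s.OrdConnected] {f : ι → α} (hf : MonotoneOn f s) :
    s.PairwiseDisjoint fun i => Set.Ioc (f (Order.pred i)) (f i) := by
  intro i hi k hk hik
  wlog hlt : i < k generalizing i k
  · exact (this hk hi hik.symm (hik.lt_or_gt.resolve_left hlt)).symm
  have hi_pred : i ≤ Order.pred k := Order.le_pred_of_lt hlt
  have hpred : Order.pred k ∈ s := Set.Icc_subset s hi hk ⟨hi_pred, Order.pred_le k⟩
  exact Set.disjoint_left.2 fun x hxi hxk =>
    hxk.1.not_ge (hxi.2.trans (hf hi hpred hi_pred))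

theorem Ioc_subset_biUnion_Ioc_sub_one {α : Type*} [LinearOrder α] (t : ℕ → α) (M : ℕ) :
    Set.Ioc (t 0) (t M) ⊆ ⋃ i ∈ Set.Icc 1 M, Set.Ioc (t (i - 1)) (t i) := by
  intro x hx
  obtain ⟨i, hi, hxi⟩ := Set.mem_iUnion₂.1 (Ioc_subset_biUnion_Ioc M t hx)
  exact Set.mem_biUnion (x := i + 1) ⟨i.succ_pos, Finset.mem_range.1 hi⟩ hxi

theorem union_subset_iff_unique_overlap_general {α : Type*} [LinearOrder α] {M : ℕ} {t : ℕ → α}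
    (ht : MonotoneOn t (Set.Iic M)) {S : Set α} (hS : S.Nonempty)
    (hSt : S ⊆ Set.Ioc (t 0) (t M)) :
    (∃ i : ℕ, 1 ≤ i ∧ i ≤ M ∧ S ⊆ Set.Ioc (t (i - 1)) (t i)) ↔
      ∃! i : ℕ, (1 ≤ i ∧ i ≤ M) ∧ (S ∩ Set.Ioc (t (i - 1)) (t i)).Nonempty := by
  have hdisj : (Set.Icc 1 M).PairwiseDisjoint fun i => Set.Ioc (t (i - 1)) (t i) :=
    (pairwiseDisjoint_Ioc_pred_of_monotoneOn ht).subset Set.Icc_subset_Iic_self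
  simpa only [Set.mem_Icc, and_assoc] using
    exists_subset_iff_existsUnique_inter_nonempty hdisj hS
      (hSt.trans (Ioc_subset_biUnion_Ioc_sub_one t M))

/-- For `0 < j < M₂`, if the two strictly increasing sequences share no common
value, `t¹_0 < t²_{j-1}` and `t²_{j+1} ≤ t¹_{M₁}`, then
`I²_j ∪ I²_{j+1} ⊆ I¹_i` for some `1 ≤ i ≤ M₁` iff there is exactly one
`1 ≤ i ≤ M₁` with `(I²_j ∪ I²_{j+1}) ∩ I¹_i ≠ ∅`. -/
theorem union_subset_iff_unique_overlap (M₁ M₂ : ℕ) (hM₁ : 1 ≤ M₁) (hM₂ : 1 ≤ M₂)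
    (t₁ t₂ : ℕ → ℝ)
    (ht₁ : ∀ i < M₁, t₁ i < t₁ (i + 1)) (ht₂ : ∀ j < M₂, t₂ j < t₂ (j + 1))
    (hasync : ∀ i ≤ M₁, ∀ j ≤ M₂, t₁ i ≠ t₂ j)
    (j : ℕ) (hj1 : 0 < j) (hj2 : j < M₂)
    (h0 : t₁ 0 < t₂ (j - 1)) (hM : t₂ (j + 1) ≤ t₁ M₁) :
    (∃ i : ℕ, 1 ≤ i ∧ i ≤ M₁ ∧
        Set.Ioc (t₂ (j - 1)) (t₂ j) ∪ Set.Ioc (t₂ j) (t₂ (j + 1)) ⊆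
          Set.Ioc (t₁ (i - 1)) (t₁ i)) ↔
    (∃! i : ℕ, (1 ≤ i ∧ i ≤ M₁) ∧
        ((Set.Ioc (t₂ (j - 1)) (t₂ j) ∪ Set.Ioc (t₂ j) (t₂ (j + 1))) ∩
          Set.Ioc (t₁ (i - 1)) (t₁ i)).Nonempty) := by
  have hleft : t₂ (j - 1) < t₂ j := by
    simpa only [Nat.sub_add_cancel hj1] using ht₂ (j - 1) (by lia)
  rw [Set.Ioc_union_Ioc_eq_Ioc hleft.le (ht₂ j hj2).le]
  exact union_subset_iff_unique_overlap_general (strictMonoOn_Iic_of_lt_succ ht₁).monotoneOn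
    (Set.nonempty_Ioc.2 (hleft.trans (ht₂ j hj2))) (Set.Ioc_subset_Ioc h0.le hM)
end
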